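/- The Koszul complex of global sections over U × U is a resolution of O(U) via restriction to the diagonal: (i) for 1 ≤ q ≤ n, every ω ∈ K^{−q} with d_K ω = 0 satisfies ω = d_K(P ω); (ii) an element f ∈ K^0 lies in the image of d_K : K^{−1} → K^0 if and only if f(z, z) = 0 for all z ∈ U; (iii) the augmentation K^0 → O(U), f ↦ (z ↦ f(z, z)), is surjective. -/

import Mathlib

/-!
Setting: `n ≥ 1`, `U ⊆ ℂⁿ` a nonempty convex open set.  Points of `U × U` are
written `p = (z, ζ)` with `z = p.1`, `ζ = p.2`.  For `0 ≤ q ≤ n`,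
`K^{-q} = Λ^q(ℂⁿ) ⊗ O(U×U)` is encoded by the coefficients of its elements on
the basis `e^I`, where the strictly increasing multi-indices
`I = (i₁ < … < i_q)` are encoded as finsets `I ⊆ Fin n` of cardinality `q`.
-/

open scoped BigOperators

namespace TwistedKoszul

variable (n : ℕ)

/-- Points of `ℂⁿ × ℂⁿ`. -/
abbrev Pt (n : ℕ) := (Fin n → ℂ) × (Fin n → ℂ)

/-- A family of coefficients, indexed by the basis vectors `e^I` of the
exterior algebra `Λ^•(ℂⁿ)` (strictly increasing multi-indices `I`, encoded as
finsets).  An element of `K^{-q}` is such a family supported on finsets of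
cardinality `q`, with holomorphic coefficients (see `MemK`). -/
abbrev Coeff (n : ℕ) := Finset (Fin n) → Pt n → ℂ

/-- The sign `(-1)^{#{i ∈ I | i < j}}`, so that `e^j ∧ e^I = sgn j I • e^{I ∪ {j}}`
for `j ∉ I`. -/
noncomputable def sgn (j : Fin n) (I : Finset (Fin n)) : ℂ :=
  (-1 : ℂ) ^ (I.filter (fun i => i < j)).card

/-- The holomorphic partial derivative `∂f/∂z^j` in the `j`-th coordinate of
the first factor. -/
noncomputable def pd (j : Fin n) (f : Pt n → ℂ) (p : Pt n) : ℂ :=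
  fderiv ℂ f p (Pi.single j 1, 0)

/-- The Koszul differential `d_K : K^{-q} → K^{-q+1}`: contraction with
`Σ_i (z^i - ζ^i) ě^i`, i.e. `d_K(f e^I) = Σ_r (-1)^{r-1} (z^{i_r} - ζ^{i_r}) f e^{I_r}`. -/
noncomputable def dK (ω : Coeff n) : Coeff n := fun J p =>
  ∑ j ∈ Jᶜ, sgn n j J * ((p.1 j - p.2 j) * ω (insert j J) p)

/-- The homotopy operator `P : K^{-q} → K^{-q-1}`:
`P(f e^I) = Σ_j (∫₀¹ t^{|I|} (∂f/∂z^j)(ζ + t(z - ζ), ζ) dt) e^j ∧ e^I`. -/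
noncomputable def P (ω : Coeff n) : Coeff n := fun J p =>
  ∑ j ∈ J, sgn n j (J.erase j) *
    ∫ t in (0:ℝ)..1, (t : ℂ) ^ (J.card - 1) *
      pd n j (ω (J.erase j)) (p.2 + t • (p.1 - p.2), p.2)

/-- The operator `res`: zero on `K^{-q}` for `q ≥ 1`, and
`res(f)(z, ζ) = f(ζ, ζ)` for `f ∈ K^0`. -/
noncomputable def res (ω : Coeff n) : Coeff n := fun J p =>
  if J = ∅ then ω ∅ (p.2, p.2) else 0

/-- The element of `K^0 = O(U×U)` determined by a single function. -/
noncomputable def ofFun (f : Pt n → ℂ) : Coeff n := fun J p => if J = ∅ then f p else 0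

/-- `ω` is an element of `K^{-q}` over `U × U`: it is supported on
multi-indices of length `q` and its coefficients are holomorphic on `U × U`. -/
noncomputable def MemK (U : Set (Fin n → ℂ)) (q : ℕ) (ω : Coeff n) : Prop :=
  (∀ I : Finset (Fin n), I.card ≠ q → ω I = 0) ∧
  ∀ I : Finset (Fin n), DifferentiableOn ℂ (ω I) (U ×ˢ U)

end TwistedKoszul

namespace TwistedKoszul

/-!
Wedging with `e^k` and contracting with a vector `v` anticommute up to the scalar `v_k`. With
`v = z - ζ`, this is a Cartan formula for `d_K` and the exterior derivative in `z`; evaluated at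
`(ζ + t(z - ζ), ζ)` it says that the integrand of `d_K P ω + P d_K ω` in the coefficient of `e^J` is
`d/dt (t^{|J|} ω_J(ζ + t(z - ζ), ζ))`. Integrating over `[0, 1]` gives `d_K P + P d_K = id - res`,
which yields exactness in negative degrees and identifies the image of `K^{-1}` in `K^0`.

`P` preserves holomorphy because the derivative of a holomorphic function in a fixed direction is a
Cauchy integral, and integrals of holomorphic functions over a compact parameter interval are again
holomorphic.
-/

section Holomorphic

open Metric Set MeasureTheory Topology

theorem aestronglyMeasurable_uIoc_of_continuousOn {H : Type*} [TopologicalSpace H]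
    [TopologicalSpace.PseudoMetrizableSpace H] {a b : ℝ} {g : ℝ → H}
    (hg : ContinuousOn g (uIcc a b)) : AEStronglyMeasurable g (volume.restrict (uIoc a b)) :=
  (hg.mono uIoc_subset_uIcc).aestronglyMeasurable measurableSet_uIoc

variable {E G T : Type*} [NormedAddCommGroup E] [NormedSpace ℂ E]
  [NormedAddCommGroup G] [NormedSpace ℂ G] [TopologicalSpace T]

theorem norm_fderiv_le_of_forall_mem_ball_norm_le {f : E → G} {c : E} {r C : ℝ} (hr : 0 < r)
    (hf : DifferentiableOn ℂ f (ball c r)) (hC : ∀ x ∈ ball c r, ‖f x‖ ≤ C) :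
    ‖fderiv ℂ f c‖ ≤ 2 * C / r := by
  refine Complex.norm_fderiv_le_div_of_mapsTo_ball hf (fun x hx => ?_) hr
  calc dist (f x) (f c) ≤ ‖f x‖ + ‖f c‖ := dist_le_norm_add_norm _ _
    _ ≤ 2 * C := by linarith [hC x hx, hC c (mem_ball_self hr)]

-- Nearby parameters give functions uniformly close on a ball, so the Cauchy estimate applies.
theorem continuousOn_fderiv_param [ProperSpace E] {W : Set E} (hW : IsOpen W) {s : Set T}
    {F : E → T → G} (hF : ContinuousOn (fun y : E × T => F y.1 y.2) (W ×ˢ s))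
    (hd : ∀ t ∈ s, DifferentiableOn ℂ (F · t) W) {x : E} (hx : x ∈ W) :
    ContinuousOn (fun t => fderiv ℂ (F · t) x) s := by
  obtain ⟨r, hr, hrW⟩ := nhds_basis_closedBall.mem_iff.1 (hW.mem_nhds hx)
  have hFswap : ContinuousOn (Function.uncurry fun t y => F y t) (s ×ˢ closedBall x r) :=
    hF.comp (f := Prod.swap) (by fun_prop) fun y hy => ⟨hrW hy.2, hy.1⟩
  intro t ht
  rw [ContinuousWithinAt, Metric.tendsto_nhds]
  intro ε hε
  obtain ⟨v, hv, hclose⟩ := (isCompact_closedBall x r).mem_uniformity_of_prod hFswap ht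
    (dist_mem_uniformity (ε := r * ε / 4) (by positivity))
  filter_upwards [hv, self_mem_nhdsWithin] with τ hτ hτs
  have hdiff : ∀ t ∈ s, DifferentiableOn ℂ (F · t) (ball x r) := fun t ht =>
    (hd t ht).mono (ball_subset_closedBall.trans hrW)
  have hdiffAt : ∀ t ∈ s, DifferentiableAt ℂ (F · t) x := fun t ht =>
    (hd t ht).differentiableAt (hW.mem_nhds hx)
  rw [dist_eq_norm, ← fderiv_fun_sub (hdiffAt τ hτs) (hdiffAt t ht)]
  calc ‖fderiv ℂ (fun y => F y τ - F y t) x‖ ≤ 2 * (r * ε / 4) / r :=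
        norm_fderiv_le_of_forall_mem_ball_norm_le hr ((hdiff τ hτs).sub (hdiff t ht))
          fun y hy => (dist_eq_norm (F y τ) (F y t)).symm.trans_le
            (hclose τ hτ y (ball_subset_closedBall hy) : dist _ _ < _).le
    _ = ε / 2 := by field_simp; norm_num
    _ < ε := half_lt_self hε

theorem differentiableOn_intervalIntegral_param [ProperSpace E] {W : Set E} (hW : IsOpen W)
    {a b : ℝ} {F : E → ℝ → G}
    (hF : ContinuousOn (fun y : E × ℝ => F y.1 y.2) (W ×ˢ uIcc a b))
    (hd : ∀ t ∈ uIcc a b, DifferentiableOn ℂ (F · t) W) :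
    DifferentiableOn ℂ (fun x => ∫ t in a..b, F x t) W := by
  intro x₀ hx₀
  obtain ⟨r, hr, hrW⟩ := nhds_basis_closedBall.mem_iff.1 (hW.mem_nhds hx₀)
  have hslice : ∀ x ∈ W, ContinuousOn (F x) (uIcc a b) := fun x hx =>
    hF.comp (f := fun t => (x, t)) (by fun_prop) fun t ht => ⟨hx, ht⟩
  obtain ⟨C, hC⟩ := ((isCompact_closedBall x₀ r).prod isCompact_uIcc).exists_bound_of_continuousOn
    (hF.mono (prod_mono_left hrW))
  have hball : ∀ x ∈ ball x₀ (r / 2), ball x (r / 2) ⊆ closedBall x₀ r := fun x hx =>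
    (ball_subset_ball' (by linarith [mem_ball.1 hx])).trans ball_subset_closedBall
  have hCauchy : ∀ t ∈ uIcc a b, ∀ x ∈ ball x₀ (r / 2),
      ‖fderiv ℂ (F · t) x‖ ≤ 2 * C / (r / 2) := fun t ht x hx =>
    norm_fderiv_le_of_forall_mem_ball_norm_le (half_pos hr)
      ((hd t ht).mono ((hball x hx).trans hrW)) fun y hy => hC (y, t) ⟨hball x hx hy, ht⟩
  refine (intervalIntegral.hasFDerivAt_integral_of_dominated_of_fderiv_le
    (F' := fun x t => fderiv ℂ (F · t) x) (ball_mem_nhds x₀ (half_pos hr)) ?_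
    (hslice x₀ hx₀).intervalIntegrable
    (aestronglyMeasurable_uIoc_of_continuousOn (continuousOn_fderiv_param hW hF hd hx₀))
    (.of_forall fun t ht => hCauchy t (uIoc_subset_uIcc ht)) intervalIntegrable_const
    (.of_forall fun t ht x hx => ?_)).differentiableAt.differentiableWithinAt
  · filter_upwards [hW.mem_nhds hx₀] with x hx
    exact aestronglyMeasurable_uIoc_of_continuousOn (hslice x hx)
  · have hxW : x ∈ W := hrW (hball x hx (mem_ball_self (half_pos hr)))
    exact ((hd t (uIoc_subset_uIcc ht)).differentiableAt (hW.mem_nhds hxW)).hasFDerivAt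

theorem fderiv_apply_eq_cderiv [CompleteSpace G] {W : Set E} (hW : IsOpen W) {f : E → G}
    (hf : DifferentiableOn ℂ f W) {x v : E} {r : ℝ} (hr : 0 < r)
    (hdisc : ∀ w ∈ closedBall (0 : ℂ) r, x + w • v ∈ W) :
    fderiv ℂ f x v = Complex.cderiv r (fun w : ℂ => f (x + w • v)) 0 := by
  have hline : Continuous fun w : ℂ => x + w • v := by fun_prop
  have hfline : DifferentiableOn ℂ (fun w : ℂ => f (x + w • v)) ((fun w : ℂ => x + w • v) ⁻¹' W) :=
    hf.comp (by fun_prop) fun w hw => hw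
  have hxW : x ∈ W := by simpa using hdisc 0 (mem_closedBall_self hr.le)
  rw [Complex.cderiv_eq_deriv (hW.preimage hline) hfline hr hdisc]
  exact ((hf.differentiableAt (hW.mem_nhds hxW)).lineDeriv_eq_fderiv).symm

theorem differentiableOn_fderiv_apply [ProperSpace E] [CompleteSpace G] {W : Set E}
    (hW : IsOpen W) {f : E → G} (hf : DifferentiableOn ℂ f W) (v : E) :
    DifferentiableOn ℂ (fun x => fderiv ℂ f x v) W := by
  intro x₀ hx₀
  have hshift : Continuous fun y : E × ℂ => y.1 + y.2 • v := by fun_prop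
  have hnhds : (fun y : E × ℂ => y.1 + y.2 • v) ⁻¹' W ∈ 𝓝 (x₀, (0 : ℂ)) :=
    (hW.preimage hshift).mem_nhds (by simpa using hx₀)
  obtain ⟨r, hr, hrW⟩ := nhds_basis_closedBall.mem_iff.1 hnhds
  have hdisc : ∀ x ∈ ball x₀ r, ∀ w ∈ closedBall (0 : ℂ) r, x + w • v ∈ W := fun x hx w hw => by
    have hmem : (x, w) ∈ closedBall x₀ r ×ˢ closedBall (0 : ℂ) r := ⟨ball_subset_closedBall hx, hw⟩
    exact hrW (closedBall_prod_same x₀ (0 : ℂ) r ▸ hmem)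
  have hcircle : ∀ θ, circleMap 0 r θ ∈ closedBall (0 : ℂ) r := circleMap_mem_closedBall 0 hr.le
  have hcderiv : DifferentiableOn ℂ
      (fun x => Complex.cderiv r (fun w : ℂ => f (x + w • v)) 0) (ball x₀ r) := by
    refine DifferentiableOn.const_smul
      (differentiableOn_intervalIntegral_param isOpen_ball ?_ fun θ _ => ?_) _
    · have hkernel : Continuous fun θ => ((circleMap 0 r θ - 0) ^ 2)⁻¹ :=
        Continuous.inv₀ (by fun_prop) fun θ => by simpa using hr.ne'
      have hfcircle : ContinuousOn (fun y : E × ℝ => f (y.1 + circleMap 0 r y.2 • v))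
          (ball x₀ r ×ˢ uIcc 0 (2 * Real.pi)) :=
        hf.continuousOn.comp (by fun_prop) fun y hy => hdisc _ hy.1 _ (hcircle _)
      simp only [deriv_circleMap]
      exact .smul (by fun_prop) (.smul (hkernel.comp continuous_snd).continuousOn hfcircle)
    · exact ((hf.comp (by fun_prop) fun x hx => hdisc x hx _ (hcircle θ)).const_smul _).const_smul _
  refine (((hcderiv.differentiableAt (ball_mem_nhds x₀ hr)).congr_of_eventuallyEq
    ?_)).differentiableWithinAt
  filter_upwards [ball_mem_nhds x₀ hr] with x hx using fderiv_apply_eq_cderiv hW hf hr (hdisc x hx)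

end Holomorphic

section Exterior

variable {n : ℕ}

/-- Left exterior multiplication `a ↦ e^k ∧ a` on `Λ^•(ℂⁿ)`, an element of which is given by its
coefficients on the basis `e^I`. -/
noncomputable def wedge (k : Fin n) (a : Finset (Fin n) → ℂ) : Finset (Fin n) → ℂ := fun J =>
  if k ∈ J then sgn n k (J.erase k) * a (J.erase k) else 0

/-- Contraction with `Σ_j v_j ě^j` on `Λ^•(ℂⁿ)`; the Koszul differential is its value at
`v = z - ζ`. -/
noncomputable def contract (v : Fin n → ℂ) (a : Finset (Fin n) → ℂ) : Finset (Fin n) → ℂ := fun J =>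
  ∑ j ∈ Jᶜ, sgn n j J * (v j * a (insert j J))

theorem sgn_mul_self (j : Fin n) (I : Finset (Fin n)) : sgn n j I * sgn n j I = 1 := by
  rw [sgn, ← mul_pow]
  simp

theorem sgn_insert {a : Fin n} {I : Finset (Fin n)} (ha : a ∉ I) (j : Fin n) :
    sgn n j (insert a I) = (if a < j then -1 else 1) * sgn n j I := by
  unfold sgn
  rw [Finset.filter_insert]
  split_ifs
  · rw [Finset.card_insert_of_notMem (by simp [ha]), pow_succ']
  · rw [one_mul]

theorem sgn_insert_mul_sgn_insert {j k : Fin n} {I : Finset (Fin n)} (hj : j ∉ I) (hk : k ∉ I)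
    (hjk : j ≠ k) :
    sgn n j (insert k I) * sgn n k (insert j I) = -(sgn n j I * sgn n k I) := by
  rw [sgn_insert hk, sgn_insert hj]
  rcases lt_or_gt_of_ne hjk with h | h
  · rw [if_neg h.not_gt, if_pos h]
    ring
  · rw [if_pos h, if_neg h.not_gt]
    ring

theorem wedge_apply_of_notMem {k : Fin n} {J : Finset (Fin n)} (hk : k ∉ J)
    (a : Finset (Fin n) → ℂ) : wedge k a J = 0 :=
  if_neg hk

theorem wedge_insert {k : Fin n} {I : Finset (Fin n)} (hk : k ∉ I) (a : Finset (Fin n) → ℂ) :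
    wedge k a (insert k I) = sgn n k I * a I := by
  rw [wedge, if_pos (Finset.mem_insert_self k I), Finset.erase_insert hk]

theorem wedge_smul (c : ℂ) (k : Fin n) (a : Finset (Fin n) → ℂ) :
    wedge k (c • a) = c • wedge k a := by
  ext J
  by_cases hk : k ∈ J <;> simp [wedge, hk, mul_left_comm]

theorem contract_smul_left (c : ℂ) (v : Fin n → ℂ) (a : Finset (Fin n) → ℂ) :
    contract (c • v) a = c • contract v a := by
  ext J
  simp only [contract, Pi.smul_apply, smul_eq_mul, Finset.mul_sum]
  exact Finset.sum_congr rfl fun j _ => by ring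

theorem contract_sum {ι : Type*} (s : Finset ι) (v : Fin n → ℂ) (a : ι → Finset (Fin n) → ℂ) :
    contract v (∑ i ∈ s, a i) = ∑ i ∈ s, contract v (a i) := by
  ext J
  simp only [contract, Finset.sum_apply, Finset.mul_sum]
  exact Finset.sum_comm

theorem contract_wedge_add_wedge_contract (v : Fin n → ℂ) (k : Fin n) (a : Finset (Fin n) → ℂ) :
    contract v (wedge k a) + wedge k (contract v a) = v k • a := by
  ext J
  by_cases hk : k ∈ J
  · obtain ⟨I, hkI, rfl⟩ : ∃ I, k ∉ I ∧ insert k I = J :=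
      ⟨J.erase k, Finset.notMem_erase k J, Finset.insert_erase hk⟩
    have hcompl : Iᶜ = insert k (insert k I)ᶜ := by
      ext i; by_cases h : i = k <;> simp [h, hkI]
    have hcancel : ∀ j ∈ (insert k I)ᶜ,
        sgn n j (insert k I) * (v j * wedge k a (insert j (insert k I))) =
          -(sgn n k I * (sgn n j I * (v j * a (insert j I)))) := by
      intro j hj
      obtain ⟨hjk, hjI⟩ : j ≠ k ∧ j ∉ I := by simpa using hj
      have hk' : k ∉ insert j I := by simp [hjk.symm, hkI]
      rw [Finset.insert_comm, wedge_insert hk']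
      linear_combination (v j * a (insert j I)) * sgn_insert_mul_sgn_insert hjI hkI hjk
    rw [Pi.add_apply, wedge_insert hkI, contract, contract, Finset.sum_congr rfl hcancel, hcompl,
      Finset.sum_insert (by simp), Finset.sum_neg_distrib, ← Finset.mul_sum, Pi.smul_apply,
      smul_eq_mul]
    linear_combination (v k * a (insert k I)) * sgn_mul_self k I
  · have hvanish : ∀ j ∈ Jᶜ, j ≠ k → sgn n j J * (v j * wedge k a (insert j J)) = 0 :=
      fun j _ hjk => by rw [wedge_apply_of_notMem (by simp [hjk.symm, hk])]; ring
    rw [Pi.add_apply, wedge_apply_of_notMem hk, contract,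
      Finset.sum_eq_single_of_mem k (by simpa using hk) hvanish, wedge_insert hk, Pi.smul_apply,
      smul_eq_mul]
    linear_combination (v k * a J) * sgn_mul_self k J

theorem contract_sum_wedge_add_sum_wedge_contract (v : Fin n → ℂ)
    (A : Fin n → Finset (Fin n) → ℂ) :
    contract v (∑ k, wedge k (A k)) + ∑ k, wedge k (contract v (A k)) = ∑ k, v k • A k := by
  simp only [contract_sum, ← Finset.sum_add_distrib, contract_wedge_add_wedge_contract]

end Exterior

section PartialDerivative

open Topology

variable {n : ℕ} {U : Set (Fin n → ℂ)}

theorem fderiv_apply_prod_zero (f : Pt n → ℂ) (x : Pt n) (v : Fin n → ℂ) :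
    fderiv ℂ f x (v, 0) = ∑ j, v j * pd n j f x := by
  have hv : ((v, 0) : Pt n) = ∑ j, v j • ((Pi.single j 1, 0) : Pt n) := by
    ext i
    · simp [Prod.fst_sum, Finset.sum_apply, Pi.single_apply]
    · simp [Prod.snd_sum]
  simp only [hv, map_sum, map_smul, smul_eq_mul, pd]

theorem differentiableOn_pd (hU : IsOpen U) {f : Pt n → ℂ}
    (hf : DifferentiableOn ℂ f (U ×ˢ U)) (j : Fin n) :
    DifferentiableOn ℂ (pd n j f) (U ×ˢ U) :=
  differentiableOn_fderiv_apply (hU.prod hU) hf _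

theorem pd_eq_zero_of_eventuallyEq {f : Pt n → ℂ} {x : Pt n} (hf : f =ᶠ[𝓝 x] 0) (k : Fin n) :
    pd n k f x = 0 := by
  rw [pd, hf.fderiv_eq]
  simp

theorem pd_sub_coord_mul {g : Pt n → ℂ} {x : Pt n} (hg : DifferentiableAt ℂ g x) (j k : Fin n) :
    pd n k (fun p => (p.1 j - p.2 j) * g p) x =
      (if j = k then g x else 0) + (x.1 j - x.2 j) * pd n k g x := by
  let coord : Pt n →L[ℂ] ℂ :=
    .proj j ∘L .fst ℂ (Fin n → ℂ) (Fin n → ℂ) - .proj j ∘L .snd ℂ (Fin n → ℂ) (Fin n → ℂ)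
  have hcoord : HasFDerivAt (fun p : Pt n => p.1 j - p.2 j) coord x := coord.hasFDerivAt
  rw [pd, (hcoord.fun_mul hg.hasFDerivAt).fderiv]
  simp [pd, coord, Pi.single_apply, add_comm]

end PartialDerivative

section Homotopy

variable {n : ℕ} {U : Set (Fin n → ℂ)} {ω : Coeff n}

/-- The holomorphic exterior derivative `Σ_k dz^k ∧ ∂ω/∂z^k` in the first factor, with `e^k`
playing the role of `dz^k`. -/
noncomputable def dz (ω : Coeff n) : Coeff n := fun J x =>
  (∑ k, wedge k fun I => pd n k (ω I) x) J

/-- The point `(ζ + t (z - ζ), ζ)` on the segment from `(ζ, ζ)` to `(z, ζ)`. -/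
noncomputable def segmentPoint (p : Pt n) (t : ℝ) : Pt n :=
  (p.2 + t • (p.1 - p.2), p.2)

theorem segmentPoint_mem (hU : Convex ℝ U) {p : Pt n} (hp : p ∈ U ×ˢ U) {t : ℝ}
    (ht : t ∈ Set.uIcc 0 1) : segmentPoint p t ∈ U ×ˢ U := by
  rw [Set.uIcc_of_le zero_le_one] at ht
  exact ⟨hU.add_smul_sub_mem hp.2 hp.1 ht, hp.2⟩

theorem continuous_segmentPoint : Continuous fun y : Pt n × ℝ => segmentPoint y.1 y.2 := by
  unfold segmentPoint
  fun_prop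

theorem segmentPoint_fst_sub_snd (p : Pt n) (t : ℝ) :
    (segmentPoint p t).1 - (segmentPoint p t).2 = (t : ℂ) • (p.1 - p.2) := by
  ext i
  simp [segmentPoint]

theorem continuousOn_comp_segmentPoint (hU : Convex ℝ U) {f : Pt n → ℂ}
    (hf : ContinuousOn f (U ×ˢ U)) {p : Pt n} (hp : p ∈ U ×ˢ U) :
    ContinuousOn (fun t => f (segmentPoint p t)) (Set.uIcc 0 1) :=
  hf.comp (continuous_segmentPoint.comp (Continuous.prodMk_right p)).continuousOn
    fun _ ht => segmentPoint_mem hU hp ht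

theorem hasDerivAt_comp_segmentPoint {f : Pt n → ℂ} {p : Pt n} {t : ℝ}
    (hf : DifferentiableAt ℂ f (segmentPoint p t)) :
    HasDerivAt (fun t => f (segmentPoint p t))
      (∑ j, (p.1 - p.2) j * pd n j f (segmentPoint p t)) t := by
  have hseg : HasDerivAt (segmentPoint p) (p.1 - p.2, 0) t := by
    refine HasDerivAt.prodMk ?_ (hasDerivAt_const _ _)
    simpa using ((hasDerivAt_id t).smul_const (p.1 - p.2)).const_add p.2
  rw [← fderiv_apply_prod_zero]
  exact (hf.hasFDerivAt.restrictScalars ℝ).comp_hasDerivAt t hseg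

theorem dK_apply (ω : Coeff n) (J : Finset (Fin n)) (p : Pt n) :
    dK n ω J p = contract (p.1 - p.2) (fun I => ω I p) J :=
  rfl

theorem differentiableOn_dK (hω : ∀ I, DifferentiableOn ℂ (ω I) (U ×ˢ U))
    (J : Finset (Fin n)) : DifferentiableOn ℂ (dK n ω J) (U ×ˢ U) :=
  .fun_sum fun j _ => .const_mul (.mul (by fun_prop) (hω (insert j J))) _

theorem differentiableOn_dz (hU : IsOpen U) (hω : ∀ I, DifferentiableOn ℂ (ω I) (U ×ˢ U))
    (J : Finset (Fin n)) : DifferentiableOn ℂ (dz ω J) (U ×ˢ U) := by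
  have hdz : dz ω J = fun x => ∑ k, wedge k (fun I => pd n k (ω I) x) J := by
    ext x
    simp only [dz, Finset.sum_apply]
  rw [hdz]
  refine .fun_sum fun k _ => ?_
  by_cases hk : k ∈ J
  · simpa only [wedge, if_pos hk] using (differentiableOn_pd hU (hω _) k).const_mul _
  · simpa only [wedge, if_neg hk] using differentiableOn_const _

theorem pd_dK {x : Pt n} (hω : ∀ I, DifferentiableAt ℂ (ω I) x) {k : Fin n}
    {I : Finset (Fin n)} (hk : k ∉ I) :
    pd n k (dK n ω I) x = sgn n k I * ω (insert k I) x +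
      contract (x.1 - x.2) (fun I => pd n k (ω I) x) I := by
  have hterm : ∀ j, DifferentiableAt ℂ (fun p : Pt n => (p.1 j - p.2 j) * ω (insert j I) p) x :=
    fun j => .mul (by fun_prop) (hω _)
  calc pd n k (dK n ω I) x
      = ∑ j ∈ Iᶜ, sgn n j I * pd n k (fun p => (p.1 j - p.2 j) * ω (insert j I) p) x := by
        unfold pd dK
        rw [fderiv_fun_sum fun j _ => (hterm j).const_mul _]
        simp [fderiv_const_mul (hterm _)]
    _ = _ := by
        simp only [pd_sub_coord_mul (hω _), mul_add, Finset.sum_add_distrib, mul_ite, mul_zero,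
          Finset.sum_ite_eq', Finset.mem_compl, hk, not_false_eq_true, if_true, contract,
          Pi.sub_apply]

theorem dz_dK {x : Pt n} (hω : ∀ I, DifferentiableAt ℂ (ω I) x) (J : Finset (Fin n)) :
    dz (dK n ω) J x = J.card * ω J x +
      (∑ k, wedge k (contract (x.1 - x.2) fun I => pd n k (ω I) x)) J := by
  have hwedge : ∀ k, wedge k (fun I => pd n k (dK n ω I) x) J = (if k ∈ J then ω J x else 0) +
      wedge k (contract (x.1 - x.2) fun I => pd n k (ω I) x) J := by
    intro k
    by_cases hk : k ∈ J
    · rw [wedge, wedge, if_pos hk, if_pos hk, if_pos hk, pd_dK hω (Finset.notMem_erase k J),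
        Finset.insert_erase hk]
      linear_combination ω J x * sgn_mul_self k (J.erase k)
    · simp [wedge, hk]
  simp [dz, hwedge, Finset.sum_add_distrib]

theorem P_eq_integral_dz (hU : IsOpen U) (hUc : Convex ℝ U)
    (hω : ∀ I, DifferentiableOn ℂ (ω I) (U ×ˢ U)) (J : Finset (Fin n)) {p : Pt n}
    (hp : p ∈ U ×ˢ U) :
    P n ω J p = ∫ t in (0 : ℝ)..1, (t : ℂ) ^ (J.card - 1) * dz ω J (segmentPoint p t) := by
  have hint : ∀ k ∈ J, IntervalIntegrable (fun t : ℝ => sgn n k (J.erase k) *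
      ((t : ℂ) ^ (J.card - 1) * pd n k (ω (J.erase k)) (segmentPoint p t)))
      MeasureTheory.volume 0 1 := by
    intro k _
    have hpd := continuousOn_comp_segmentPoint hUc
      (differentiableOn_pd hU (hω (J.erase k)) k).continuousOn hp
    exact ContinuousOn.intervalIntegrable (by fun_prop)
  calc P n ω J p
      = ∫ t in (0 : ℝ)..1, ∑ k ∈ J, sgn n k (J.erase k) *
          ((t : ℂ) ^ (J.card - 1) * pd n k (ω (J.erase k)) (segmentPoint p t)) := by
        rw [intervalIntegral.integral_finsetSum hint]
        simp only [intervalIntegral.integral_const_mul]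
        rfl
    _ = _ := by
        simp only [dz, wedge, Finset.sum_apply, Finset.sum_ite_mem, Finset.univ_inter,
          Finset.mul_sum, mul_left_comm]

theorem dK_P_eq_integral (hU : IsOpen U) (hUc : Convex ℝ U)
    (hω : ∀ I, DifferentiableOn ℂ (ω I) (U ×ˢ U)) (J : Finset (Fin n)) {p : Pt n}
    (hp : p ∈ U ×ˢ U) :
    dK n (P n ω) J p = ∫ t in (0 : ℝ)..1,
      (t : ℂ) ^ J.card * contract (p.1 - p.2) (fun I => dz ω I (segmentPoint p t)) J := by
  have hP : ∀ j ∈ Jᶜ, P n ω (insert j J) p =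
      ∫ t in (0 : ℝ)..1, (t : ℂ) ^ J.card * dz ω (insert j J) (segmentPoint p t) := by
    intro j hj
    rw [P_eq_integral_dz hU hUc hω _ hp, Finset.card_insert_of_notMem (Finset.mem_compl.1 hj),
      Nat.add_sub_cancel]
  have hint : ∀ j ∈ Jᶜ, IntervalIntegrable (fun t : ℝ => sgn n j J * ((p.1 - p.2) j *
      ((t : ℂ) ^ J.card * dz ω (insert j J) (segmentPoint p t)))) MeasureTheory.volume 0 1 := by
    intro j _
    have hdz := continuousOn_comp_segmentPoint hUc
      (differentiableOn_dz hU hω (insert j J)).continuousOn hp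
    exact ContinuousOn.intervalIntegrable (by fun_prop)
  calc dK n (P n ω) J p
      = ∫ t in (0 : ℝ)..1, ∑ j ∈ Jᶜ, sgn n j J * ((p.1 - p.2) j *
          ((t : ℂ) ^ J.card * dz ω (insert j J) (segmentPoint p t))) := by
        rw [intervalIntegral.integral_finsetSum hint, dK_apply, contract]
        simp only [intervalIntegral.integral_const_mul]
        exact Finset.sum_congr rfl fun j hj => by rw [hP j hj]
    _ = _ := by simp only [contract, Finset.mul_sum, mul_left_comm]

theorem contract_dz_add_dz_dK_segmentPoint {p : Pt n} {t : ℝ}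
    (hω : ∀ I, DifferentiableAt ℂ (ω I) (segmentPoint p t)) (J : Finset (Fin n)) :
    (t : ℂ) ^ J.card * contract (p.1 - p.2) (fun I => dz ω I (segmentPoint p t)) J +
        (t : ℂ) ^ (J.card - 1) * dz (dK n ω) J (segmentPoint p t) =
      J.card * (t : ℂ) ^ (J.card - 1) * ω J (segmentPoint p t) +
        (t : ℂ) ^ J.card * ∑ j, (p.1 - p.2) j * pd n j (ω J) (segmentPoint p t) := by
  have hanticomm := congrFun (contract_sum_wedge_add_sum_wedge_contract (p.1 - p.2)
    fun k I => pd n k (ω I) (segmentPoint p t)) J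
  have hdz : (fun I => dz ω I (segmentPoint p t)) =
      ∑ k, wedge k fun I => pd n k (ω I) (segmentPoint p t) := rfl
  simp only [Pi.add_apply, Finset.sum_apply, Pi.smul_apply, smul_eq_mul] at hanticomm
  rw [dz_dK hω, segmentPoint_fst_sub_snd, ← hanticomm, hdz]
  simp only [contract_smul_left, wedge_smul, Finset.sum_apply, Pi.smul_apply, smul_eq_mul,
    ← Finset.mul_sum]
  rcases J.eq_empty_or_nonempty with rfl | hJ
  · simp [wedge]
  · rw [← pow_sub_one_mul hJ.card_ne_zero (t : ℂ)]
    ring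

theorem dK_P_add_P_dK (hU : IsOpen U) (hUc : Convex ℝ U)
    (hω : ∀ I, DifferentiableOn ℂ (ω I) (U ×ˢ U)) (J : Finset (Fin n)) {p : Pt n}
    (hp : p ∈ U ×ˢ U) :
    dK n (P n ω) J p + P n (dK n ω) J p = ω J p - res n ω J p := by
  have hdz := fun I =>
    continuousOn_comp_segmentPoint hUc (differentiableOn_dz hU hω I).continuousOn hp
  have hdzdK := continuousOn_comp_segmentPoint hUc
    (differentiableOn_dz hU (differentiableOn_dK hω) J).continuousOn hp
  have hdKP : ContinuousOn (fun t : ℝ => (t : ℂ) ^ J.card *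
      contract (p.1 - p.2) (fun I => dz ω I (segmentPoint p t)) J) (Set.uIcc 0 1) := by
    unfold contract
    fun_prop
  have hPdK : ContinuousOn (fun t : ℝ => (t : ℂ) ^ (J.card - 1) * dz (dK n ω) J (segmentPoint p t))
      (Set.uIcc 0 1) := by
    fun_prop
  have hderiv : ∀ t ∈ Set.uIcc (0 : ℝ) 1,
      HasDerivAt (fun t : ℝ => (t : ℂ) ^ J.card * ω J (segmentPoint p t))
        ((t : ℂ) ^ J.card * contract (p.1 - p.2) (fun I => dz ω I (segmentPoint p t)) J +
          (t : ℂ) ^ (J.card - 1) * dz (dK n ω) J (segmentPoint p t)) t := by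
    intro t ht
    have hωt := fun I =>
      (hω I).differentiableAt ((hU.prod hU).mem_nhds (segmentPoint_mem hUc hp ht))
    rw [contract_dz_add_dz_dK_segmentPoint hωt]
    exact .mul (by simpa using (hasDerivAt_pow J.card (t : ℂ)).comp_ofReal)
      (hasDerivAt_comp_segmentPoint (hωt J))
  rw [dK_P_eq_integral hU hUc hω J hp, P_eq_integral_dz hU hUc (differentiableOn_dK hω) J hp,
    ← intervalIntegral.integral_add hdKP.intervalIntegrable hPdK.intervalIntegrable,
    intervalIntegral.integral_eq_sub_of_hasDerivAt hderiv (hdKP.add hPdK).intervalIntegrable]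
  rcases J.eq_empty_or_nonempty with rfl | hJ
  · simp [segmentPoint, res]
  · simp [segmentPoint, res, hJ.ne_empty]

theorem P_eq_zero_of_forall_eq_zero (hU : IsOpen U) (hUc : Convex ℝ U)
    (hω : ∀ I, ∀ p ∈ U ×ˢ U, ω I p = 0) (J : Finset (Fin n)) {p : Pt n} (hp : p ∈ U ×ˢ U) :
    P n ω J p = 0 := by
  have hpd : ∀ I k, ∀ x ∈ U ×ˢ U, pd n k (ω I) x = 0 := fun I k x hx =>
    pd_eq_zero_of_eventuallyEq (Set.EqOn.eventuallyEq_of_mem (hω I) ((hU.prod hU).mem_nhds hx)) k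
  refine Finset.sum_eq_zero fun k _ => mul_eq_zero_of_right _ ?_
  exact intervalIntegral.integral_zero_ae (.of_forall fun t ht =>
    mul_eq_zero_of_right _ (hpd _ _ _ (segmentPoint_mem hUc hp (Set.uIoc_subset_uIcc ht))))

theorem differentiableOn_P (hU : IsOpen U) (hUc : Convex ℝ U)
    (hω : ∀ I, DifferentiableOn ℂ (ω I) (U ×ˢ U)) (J : Finset (Fin n)) :
    DifferentiableOn ℂ (P n ω J) (U ×ˢ U) := by
  have hpd := fun k => differentiableOn_pd hU (hω (J.erase k)) k
  refine .fun_sum fun k _ => .const_mul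
    (differentiableOn_intervalIntegral_param (hU.prod hU) ?_ fun t ht => ?_) _
  · have hcomp : ContinuousOn (fun y : Pt n × ℝ => pd n k (ω (J.erase k)) (segmentPoint y.1 y.2))
        ((U ×ˢ U) ×ˢ Set.uIcc 0 1) :=
      (hpd k).continuousOn.comp continuous_segmentPoint.continuousOn
        fun y hy => segmentPoint_mem hUc hy.1 hy.2
    exact .mul (by fun_prop) hcomp
  · have hseg : Differentiable ℂ fun p : Pt n => segmentPoint p t := by
      unfold segmentPoint
      fun_prop
    exact ((hpd k).comp hseg.differentiableOn fun p hp => segmentPoint_mem hUc hp ht).const_mul _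

theorem memK_P (hU : IsOpen U) (hUc : Convex ℝ U) {q : ℕ} (hω : MemK n U q ω) :
    MemK n U (q + 1) (P n ω) := by
  refine ⟨fun J hJ => ?_, differentiableOn_P hU hUc hω.2⟩
  ext p
  refine Finset.sum_eq_zero fun k hk => ?_
  have hcard := Finset.card_erase_add_one hk
  have hzero : ω (J.erase k) = 0 := hω.1 _ (by omega)
  simp [hzero, pd]

theorem memK_zero_ofFun {f : Pt n → ℂ} (hf : DifferentiableOn ℂ f (U ×ˢ U)) :
    MemK n U 0 (ofFun n f) := by
  refine ⟨fun I hI => ?_, fun I => ?_⟩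
  · ext p
    exact if_neg fun h => hI (by simp [h])
  · by_cases hI : I = ∅
    · exact hf.congr fun p _ => if_pos hI
    · exact (differentiableOn_const 0).congr fun p _ => if_neg hI

theorem dK_eq_zero_of_memK_zero (hω : MemK n U 0 ω) (J : Finset (Fin n)) (p : Pt n) :
    dK n ω J p = 0 :=
  Finset.sum_eq_zero fun j _ => by simp [hω.1 (insert j J) (by simp)]

theorem dK_diagonal (ω : Coeff n) (J : Finset (Fin n)) (z : Fin n → ℂ) :
    dK n ω J (z, z) = 0 := by
  simp [dK]

theorem dK_P_of_forall_dK_eq_zero (hU : IsOpen U) (hUc : Convex ℝ U)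
    (hω : ∀ I, DifferentiableOn ℂ (ω I) (U ×ˢ U))
    (hclosed : ∀ J, ∀ p ∈ U ×ˢ U, dK n ω J p = 0) (J : Finset (Fin n)) {p : Pt n}
    (hp : p ∈ U ×ˢ U) : dK n (P n ω) J p = ω J p - res n ω J p := by
  rw [← dK_P_add_P_dK hU hUc hω J hp, P_eq_zero_of_forall_eq_zero hU hUc hclosed J hp, add_zero]

end Homotopy

/-- The Koszul complex of global sections over `U × U` is a
resolution of `O(U)` via restriction to the diagonal:
(i) for `1 ≤ q ≤ n`, every `d_K`-closed `ω ∈ K^{-q}` satisfies `ω = d_K(P ω)`;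
(ii) `f ∈ K^0` lies in the image of `d_K : K^{-1} → K^0` iff `f(z,z) = 0` on `U`;
(iii) the augmentation `K^0 → O(U)`, `f ↦ (z ↦ f(z,z))`, is surjective. -/
theorem statement2 (n : ℕ) (hn : 1 ≤ n)
    (U : Set (Fin n → ℂ)) (hUopen : IsOpen U) (hUconv : Convex ℝ U)
    (hUne : U.Nonempty) :
    (∀ q : ℕ, 1 ≤ q → q ≤ n → ∀ ω : Coeff n, MemK n U q ω →
      (∀ J : Finset (Fin n), ∀ p ∈ U ×ˢ U, dK n ω J p = 0) →
      ∀ J : Finset (Fin n), ∀ p ∈ U ×ˢ U, ω J p = dK n (P n ω) J p) ∧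
    (∀ f : Pt n → ℂ, DifferentiableOn ℂ f (U ×ˢ U) →
      ((∃ η : Coeff n, MemK n U 1 η ∧ ∀ p ∈ U ×ˢ U, dK n η ∅ p = f p) ↔
        ∀ z ∈ U, f (z, z) = 0)) ∧
    (∀ g : (Fin n → ℂ) → ℂ, DifferentiableOn ℂ g U →
      ∃ f : Pt n → ℂ, DifferentiableOn ℂ f (U ×ˢ U) ∧ ∀ z ∈ U, f (z, z) = g z) := by
  refine ⟨fun q hq _ ω hω hclosed J p hp => ?_, fun f hf => ⟨?_, fun hdiag => ?_⟩,
    fun g hg => ⟨fun p => g p.1, hg.comp (by fun_prop) fun p hp => hp.1, fun z _ => rfl⟩⟩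
  · have hres : res n ω J p = 0 := by
      simp [res, hω.1 ∅ (by simpa using (Nat.one_le_iff_ne_zero.1 hq).symm)]
    rw [dK_P_of_forall_dK_eq_zero hUopen hUconv hω.2 hclosed J hp, hres, sub_zero]
  · rintro ⟨η, -, hη⟩ z hz
    rw [← hη (z, z) ⟨hz, hz⟩, dK_diagonal]
  · have hf₀ := memK_zero_ofFun hf
    refine ⟨P n (ofFun n f), memK_P hUopen hUconv hf₀, fun p hp => ?_⟩
    rw [dK_P_of_forall_dK_eq_zero hUopen hUconv hf₀.2
      (fun J p _ => dK_eq_zero_of_memK_zero hf₀ J p) ∅ hp]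
    simp [ofFun, res, hdiag p.2 hp.2]

end TwistedKoszul
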